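/- Let |p|<1 and let a_1,…,a_n, b_1,…,b_n ∈ ℂ* satisfy ∏_{k=1}^n a_k = ∏_{k=1}^n b_k and a_j/a_k ∉ {p^m : m ∈ ℤ} for all j ≠ k. Then ∑_{k=1}^n [∏_{j=1}^n θ(a_k/b_j;p)] / [∏_{j≠k} θ(a_k/a_j;p)] = 0. -/

import Mathlib

noncomputable def qPochhammerInf (z q : ℂ) : ℂ := ∏' j : ℕ, (1 - z * q ^ j)

noncomputable def theta (z p : ℂ) : ℂ :=
  ∏' j : ℕ, (1 - z * p ^ j) * (1 - p ^ (j + 1) * z⁻¹)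

noncomputable def ellGamma (z p q : ℂ) : ℂ :=
  ∏' jk : ℕ × ℕ,
    (1 - z⁻¹ * p ^ (jk.1 + 1) * q ^ (jk.2 + 1)) / (1 - z * p ^ jk.1 * q ^ jk.2)

section LaurentUniqueness

open Complex Metric Set

theorem circleIntegral_comp_mul_left (g : ℂ → ℂ) (p : ℂ) :
    (∮ z in C(0, 1), p * g (p * z)) = ∮ z in C(0, ‖p‖), g z := by
  have hrot (t : ℝ) : p * circleMap 0 1 t = circleMap 0 ‖p‖ (t + p.arg) := by
    conv_lhs => rw [← Complex.norm_mul_exp_arg_mul_I p]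
    simp only [circleMap, zero_add, ofReal_add, add_mul, Complex.exp_add, ofReal_one]
    ring
  have hper : Function.Periodic
      (fun t : ℝ ↦ deriv (circleMap 0 ‖p‖) t • g (circleMap 0 ‖p‖ t)) (2 * Real.pi) := by
    intro t
    simp [deriv_circleMap, periodic_circleMap 0 ‖p‖ t]
  simp only [circleIntegral]
  calc
    _ = ∫ t in (0 : ℝ)..2 * Real.pi, (fun t : ℝ ↦ deriv (circleMap 0 ‖p‖) t •
          g (circleMap 0 ‖p‖ t)) (t + p.arg) := by
      refine intervalIntegral.integral_congr fun t _ ↦ ?_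
      simp only [deriv_circleMap, smul_eq_mul, ← hrot]
      ring
    _ = ∫ t in p.arg..p.arg + 2 * Real.pi, (fun t : ℝ ↦ deriv (circleMap 0 ‖p‖) t •
          g (circleMap 0 ‖p‖ t)) t := by
      rw [intervalIntegral.integral_comp_add_right (fun t : ℝ ↦ deriv (circleMap 0 ‖p‖) t •
        g (circleMap 0 ‖p‖ t)), zero_add, add_comm]
    _ = _ := by
      rw [hper.intervalIntegral_add_eq p.arg 0, zero_add]

theorem eq_zero_on_unit_circle_of_circleIntegral_eq_zero {f : ℂ → ℂ}
    (hf : ContinuousOn f {0}ᶜ) (h : ∀ m : ℤ, (∮ z in C(0, 1), z ^ m * f z) = 0)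
    {w : ℂ} (hw : ‖w‖ = 1) : f w = 0 := by
  have : Fact (0 < 2 * Real.pi) := ⟨Real.two_pi_pos⟩
  let F : C(AddCircle (2 * Real.pi), ℂ) :=
    ⟨fun x ↦ f (AddCircle.toCircle x : Circle), hf.comp_continuous
      (continuous_subtype_val.comp AddCircle.continuous_toCircle) fun x ↦ by simp⟩
  have hcoe (t : ℝ) : ((AddCircle.toCircle (t : AddCircle (2 * Real.pi)) : Circle) : ℂ) =
      circleMap 0 1 t := by
    rw [AddCircle.toCircle_apply_mk]
    simp [circleMap, Circle.coe_exp]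
  have hcoeff (n : ℤ) : fourierCoeff F n = 0 := by
    rw [fourierCoeff_eq_intervalIntegral F n 0]
    have key := h (-n - 1)
    simp only [circleIntegral, deriv_circleMap, smul_eq_mul] at key
    have : ∀ t : ℝ, circleMap 0 1 t * I * (circleMap 0 1 t ^ (-n - 1) * f (circleMap 0 1 t)) =
        I * (@fourier (2 * Real.pi) (-n) t • F t) := by
      intro t
      have hne : circleMap 0 1 t ≠ 0 := circleMap_ne_center one_ne_zero
      have h1 : @fourier (2 * Real.pi) (-n) t = circleMap 0 1 t ^ (-n) := by
        rw [fourier_apply, AddCircle.toCircle_zsmul, Circle.coe_zpow, hcoe]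
      rw [h1, zpow_sub_one₀ hne]
      change _ = I * (_ • f _)
      rw [hcoe, smul_eq_mul]
      field_simp
    simp only [this, intervalIntegral.integral_const_mul, mul_eq_zero, I_ne_zero, false_or] at key
    rw [zero_add, key, smul_zero]
  have hsum : Summable (fourierCoeff F) := by
    simp only [show fourierCoeff F = 0 from funext hcoeff]
    exact summable_zero
  have hval := has_pointwise_sum_fourier_series_of_summable hsum (w.arg : AddCircle (2 * Real.pi))
  simp only [hcoeff, zero_smul] at hval
  have hz := hval.unique hasSum_zero
  change f _ = 0 at hz
  rw [hcoe] at hz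
  have hwarg : circleMap 0 1 w.arg = w := by
    conv_rhs => rw [← Complex.norm_mul_exp_arg_mul_I w]
    simp [circleMap, hw]
  rwa [hwarg] at hz

theorem eq_zero_of_circleIntegral_eq_zero {f : ℂ → ℂ}
    (hf : DifferentiableOn ℂ f {0}ᶜ) (h : ∀ m : ℤ, (∮ z in C(0, 1), z ^ m * f z) = 0)
    {z : ℂ} (hz : z ≠ 0) : f z = 0 := by
  have hopen : IsOpen ({0}ᶜ : Set ℂ) := isOpen_compl_singleton
  have han : AnalyticOnNhd ℂ f {0}ᶜ := hf.analyticOnNhd hopen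
  refine han.eqOn_of_preconnected_of_frequently_eq (g := fun _ ↦ 0) analyticOnNhd_const
    (isConnected_compl_singleton_of_one_lt_rank (by simp) 0).isPreconnected
    (z₀ := 1) (by simp) ?_ hz
  have hcircle (t : ℝ) : f (circleMap 0 1 t) = 0 :=
    eq_zero_on_unit_circle_of_circleIntegral_eq_zero hf.continuousOn h (by simp)
  have hlim : Filter.Tendsto (fun t : ℝ ↦ circleMap 0 1 t) (nhdsWithin 0 {0}ᶜ)
      (nhdsWithin 1 {1}ᶜ) := by
    have := (hasDerivAt_circleMap 0 1 0).tendsto_nhdsNE (by simp)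
    rwa [show circleMap 0 1 0 = 1 by simp [circleMap]] at this
  exact hlim.frequently (Filter.Eventually.frequently (Filter.Eventually.of_forall hcircle))

theorem circleIntegral_mul_zpow_recurrence {f : ℂ → ℂ} {p K : ℂ} (hp : ‖p‖ < 1) (hp0 : p ≠ 0)
    (hf : DifferentiableOn ℂ f {0}ᶜ) (hq : ∀ z ≠ 0, f (p * z) = K * z ^ (-2 : ℤ) * f z) (m : ℤ) :
    (∮ z in C(0, 1), z ^ m * f z) =
      p ^ (m + 1) * K * ∮ z in C(0, 1), z ^ (m - 2) * f z := by
  have hpos : 0 < ‖p‖ := norm_pos_iff.mpr hp0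
  have hd : DifferentiableOn ℂ (fun z ↦ z ^ m * f z) {0}ᶜ := by
    refine DifferentiableOn.mul (fun z hz ↦ ?_) hf
    exact (differentiableAt_zpow.mpr (Or.inl hz)).differentiableWithinAt
  rw [circleIntegral_eq_of_differentiable_on_annulus_off_countable hpos hp.le
    (s := ∅) countable_empty (f := fun z ↦ z ^ m * f z)
    (hd.continuousOn.mono ?_) ?_, ← circleIntegral_comp_mul_left, ← circleIntegral.integral_const_mul]
  · refine circleIntegral.integral_congr zero_le_one fun z hz ↦ ?_
    have hz0 : z ≠ 0 := by
      rintro rfl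
      simp at hz
    simp only [hq z hz0, mul_zpow, zpow_add₀ hp0, zpow_sub₀ hz0, zpow_neg, zpow_one]
    ring
  · rintro z ⟨-, hz⟩ rfl
    exact hz (by simpa using hp0)
  · rintro z ⟨⟨-, hz⟩, -⟩
    refine hd.differentiableAt (isOpen_compl_singleton.mem_nhds ?_)
    rintro rfl
    simp at hz

theorem eq_zero_of_quasiperiodic {f : ℂ → ℂ} {p K : ℂ} (hp : ‖p‖ < 1) (hp0 : p ≠ 0) (hK : K ≠ 0)
    (hf : DifferentiableOn ℂ f {0}ᶜ) (hq : ∀ z ≠ 0, f (p * z) = K * z ^ (-2 : ℤ) * f z)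
    (h0 : (∮ z in C(0, 1), f z) = 0) (h1 : (∮ z in C(0, 1), z * f z) = 0)
    {z : ℂ} (hz : z ≠ 0) : f z = 0 := by
  refine eq_zero_of_circleIntegral_eq_zero hf ?_ hz
  have hrec := circleIntegral_mul_zpow_recurrence hp hp0 hf hq
  suffices h : ∀ m : ℤ, (∮ z in C(0, 1), z ^ m * f z) = 0 ∧
      (∮ z in C(0, 1), z ^ (m + 1) * f z) = 0 from fun m ↦ (h m).1
  intro m
  induction m using Int.induction_on with
  | zero => simpa using ⟨h0, h1⟩
  | succ k ih =>
    refine ⟨ih.2, ?_⟩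
    rw [hrec, show (k : ℤ) + 1 + 1 - 2 = k by ring, ih.1, mul_zero]
  | pred k ih =>
    rw [sub_add_cancel]
    refine ⟨?_, ih.1⟩
    have := hrec (-k + 1)
    rw [ih.2, show -(k : ℤ) + 1 - 2 = -k - 1 by ring] at this
    simpa [hK, zpow_ne_zero _ hp0] using this.symm

end LaurentUniqueness

section Theta

theorem summable_const_mul_pow {p : ℂ} (hp : ‖p‖ < 1) (z : ℂ) :
    Summable fun j : ℕ ↦ ‖-(z * p ^ j)‖ := by
  simpa using (summable_geometric_of_lt_one (norm_nonneg p) hp).mul_left ‖z‖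

theorem multipliable_qPochhammerInf {p : ℂ} (hp : ‖p‖ < 1) (z : ℂ) :
    Multipliable fun j : ℕ ↦ 1 - z * p ^ j := by
  simpa [sub_eq_add_neg] using multipliable_one_add_of_summable (summable_const_mul_pow hp z)

theorem qPochhammerInf_eq_mul {p : ℂ} (hp : ‖p‖ < 1) (z : ℂ) :
    qPochhammerInf z p = (1 - z) * qPochhammerInf (z * p) p := by
  have hshift (j : ℕ) : 1 - z * p ^ (j + 1) = 1 - z * p * p ^ j := by ring
  have h' : Multipliable fun j : ℕ ↦ 1 - z * p ^ (j + 1) := by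
    simpa only [hshift] using multipliable_qPochhammerInf hp (z * p)
  have := tprod_eq_zero_mul' (f := fun j : ℕ ↦ 1 - z * p ^ j) h'
  simp only [hshift, pow_zero, mul_one] at this
  exact this

theorem qPochhammerInf_ne_zero {p z : ℂ} (hp : ‖p‖ < 1) (hz : ∀ j : ℕ, z * p ^ j ≠ 1) :
    qPochhammerInf z p ≠ 0 := by
  have := tprod_one_add_ne_zero_of_summable (f := fun j : ℕ ↦ -(z * p ^ j))
    (fun j ↦ by simpa [← sub_eq_add_neg, sub_eq_zero] using (hz j).symm)
    (summable_const_mul_pow hp z)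
  simpa [qPochhammerInf, sub_eq_add_neg] using this

theorem differentiable_qPochhammerInf {p : ℂ} (hp : ‖p‖ < 1) :
    Differentiable ℂ fun z ↦ qPochhammerInf z p := by
  intro z
  have hu : Summable fun j : ℕ ↦ (‖z‖ + 1) * ‖p‖ ^ j :=
    (summable_geometric_of_lt_one (norm_nonneg p) hp).mul_left _
  have hprod := Summable.hasProdLocallyUniformlyOn_nat_one_add
    (f := fun (j : ℕ) (w : ℂ) ↦ -(w * p ^ j)) (K := Metric.ball z 1) Metric.isOpen_ball hu
    (Filter.Eventually.of_forall fun j w hw ↦ by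
      rw [norm_neg, norm_mul, norm_pow]
      gcongr
      have := norm_sub_norm_le w z
      rw [mem_ball_iff_norm] at hw
      linarith)
    (fun j ↦ by fun_prop)
  have hd := hprod.tendstoLocallyUniformlyOn_finsetRange.differentiableOn
    (Filter.Eventually.of_forall fun n ↦ by fun_prop) Metric.isOpen_ball
  have := hd.differentiableAt (Metric.isOpen_ball.mem_nhds (Metric.mem_ball_self one_pos))
  simpa [qPochhammerInf, sub_eq_add_neg] using this

theorem theta_eq_qPochhammerInf_mul {p : ℂ} (hp : ‖p‖ < 1) (z : ℂ) :
    theta z p = qPochhammerInf z p * qPochhammerInf (z⁻¹ * p) p := by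
  rw [qPochhammerInf, qPochhammerInf, ← (multipliable_qPochhammerInf hp z).tprod_mul
    (multipliable_qPochhammerInf hp _), theta]
  congr! 3 with j
  ring

theorem theta_zero_right (z : ℂ) : theta z 0 = 1 - z := by
  rw [theta, tprod_eq_mulSingle 0 fun j hj ↦ by simp [hj]]
  simp

theorem theta_one {p : ℂ} (hp : ‖p‖ < 1) : theta 1 p = 0 := by
  rw [theta_eq_qPochhammerInf_mul hp, qPochhammerInf_eq_mul hp]
  simp

theorem theta_inv {p z : ℂ} (hp : ‖p‖ < 1) (hz : z ≠ 0) : theta z⁻¹ p = -z⁻¹ * theta z p := by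
  rw [theta_eq_qPochhammerInf_mul hp, theta_eq_qPochhammerInf_mul hp,
    qPochhammerInf_eq_mul hp z⁻¹, qPochhammerInf_eq_mul hp z, inv_inv]
  field_simp
  ring

theorem theta_mul_left {p z : ℂ} (hp : ‖p‖ < 1) (hp0 : p ≠ 0) (hz : z ≠ 0) :
    theta (p * z) p = -z⁻¹ * theta z p := by
  rw [theta_eq_qPochhammerInf_mul hp, theta_eq_qPochhammerInf_mul hp,
    show (p * z)⁻¹ * p = z⁻¹ by field_simp, qPochhammerInf_eq_mul hp z⁻¹,
    qPochhammerInf_eq_mul hp z, mul_comm p z]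
  field_simp
  ring

theorem theta_ne_zero {p z : ℂ} (hp : ‖p‖ < 1) (hz : z ≠ 0) (h : ∀ m : ℤ, z ≠ p ^ m) :
    theta z p ≠ 0 := by
  rw [theta_eq_qPochhammerInf_mul hp]
  refine mul_ne_zero (qPochhammerInf_ne_zero hp fun j hj ↦ h (-j) ?_)
    (qPochhammerInf_ne_zero hp fun j hj ↦ h (j + 1 : ℕ) ?_)
  · rw [zpow_neg, zpow_natCast]
    exact eq_inv_of_mul_eq_one_left hj
  · rw [zpow_natCast, pow_succ']
    field_simp at hj
    exact hj.symm

theorem differentiableOn_theta {p : ℂ} (hp : ‖p‖ < 1) :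
    DifferentiableOn ℂ (fun z ↦ theta z p) {0}ᶜ := by
  have hQ := differentiable_qPochhammerInf hp
  simp only [theta_eq_qPochhammerInf_mul hp]
  intro z hz
  have hz0 : z ≠ 0 := hz
  refine (DifferentiableAt.mul (hQ z) ?_).differentiableWithinAt
  exact (hQ _).comp z ((differentiableAt_inv hz0).mul_const p)

end Theta

section ThetaProduct

open Metric Set

theorem differentiableOn_theta_mul_theta {p : ℂ} (hp : ‖p‖ < 1) {c x : ℂ} (hc : c ≠ 0)
    (hx : x ≠ 0) :
    DifferentiableOn ℂ (fun z ↦ theta (x / z) p * theta (x * z / c) p) {0}ᶜ := by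
  have hθ := differentiableOn_theta hp
  refine DifferentiableOn.mul (hθ.comp (fun z hz ↦ ?_) fun z hz ↦ ?_)
    (hθ.comp (fun z hz ↦ ?_) fun z hz ↦ ?_)
  · have hz0 : z ≠ 0 := hz
    exact ((differentiableAt_const x).div differentiableAt_id hz0).differentiableWithinAt
  · exact div_ne_zero hx hz
  · fun_prop
  · exact div_ne_zero (mul_ne_zero hx hz) hc

theorem theta_mul_theta_quasiperiodic {p : ℂ} (hp : ‖p‖ < 1) (hp0 : p ≠ 0) {c x z : ℂ}
    (hc : c ≠ 0) (hx : x ≠ 0) (hz : z ≠ 0) :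
    theta (x / (p * z)) p * theta (x * (p * z) / c) p =
      c / p * z ^ (-2 : ℤ) * (theta (x / z) p * theta (x * z / c) p) := by
  have h1 := theta_mul_left hp hp0 (z := x / (p * z)) (by positivity)
  rw [show p * (x / (p * z)) = x / z by field_simp] at h1
  rw [h1, show x * (p * z) / c = p * (x * z / c) by ring,
    theta_mul_left hp hp0 (z := x * z / c) (by positivity)]
  simp only [zpow_neg, zpow_ofNat]
  field_simp

theorem exists_ne_zero_linear_relation (u v : Fin 3 → ℂ) :
    ∃ l : Fin 3 → ℂ, l ≠ 0 ∧ ∑ i, l i * u i = 0 ∧ ∑ i, l i * v i = 0 := by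
  obtain ⟨l, hl, h⟩ := Matrix.exists_mulVec_eq_zero_iff.mpr
    (show (Matrix.of ![u, v, 0]).det = 0 from Matrix.det_eq_zero_of_row_eq_zero 2 (by simp))
  refine ⟨l, hl, ?_, ?_⟩
  · simpa [Matrix.mulVec, dotProduct, mul_comm] using congrFun h 0
  · simpa [Matrix.mulVec, dotProduct, mul_comm] using congrFun h 1

theorem exists_linear_relation_of_quasiperiodic {p K : ℂ} (hp : ‖p‖ < 1) (hp0 : p ≠ 0)
    (hK : K ≠ 0) (F : Fin 3 → ℂ → ℂ) (hF : ∀ i, DifferentiableOn ℂ (F i) {0}ᶜ)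
    (hq : ∀ i, ∀ z ≠ 0, F i (p * z) = K * z ^ (-2 : ℤ) * F i z) :
    ∃ l : Fin 3 → ℂ, l ≠ 0 ∧ ∀ z ≠ 0, ∑ i, l i * F i z = 0 := by
  obtain ⟨l, hl, h0, h1⟩ := exists_ne_zero_linear_relation (fun i ↦ ∮ z in C(0, 1), F i z)
    (fun i ↦ ∮ z in C(0, 1), z * F i z)
  have hsub : sphere (0 : ℂ) 1 ⊆ {0}ᶜ := by
    rintro z hz rfl
    simp at hz
  have hcont (i : Fin 3) : ContinuousOn (F i) (sphere 0 1) := (hF i).continuousOn.mono hsub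
  refine ⟨l, hl, fun z hz ↦ eq_zero_of_quasiperiodic
    (f := fun z ↦ ∑ i, l i * F i z) hp hp0 hK ?_ ?_ ?_ ?_ hz⟩
  · exact DifferentiableOn.fun_sum fun i _ ↦ (hF i).const_mul (l i)
  · intro z hz
    simp only [Finset.mul_sum]
    refine Finset.sum_congr rfl fun i _ ↦ ?_
    rw [hq i z hz]
    ring
  · rw [circleIntegral.integral_fun_sum]
    · simpa only [circleIntegral.integral_const_mul] using h0
    · exact fun i _ ↦ (continuousOn_const.mul (hcont i)).circleIntegrable zero_le_one
  · simp only [Finset.mul_sum, mul_left_comm _ (l _)]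
    rw [circleIntegral.integral_fun_sum]
    · simpa only [circleIntegral.integral_const_mul] using h1
    · exact fun i _ ↦ (continuousOn_const.mul
        (continuousOn_id.mul (hcont i))).circleIntegrable zero_le_one

theorem sum_theta_mul_theta_eq_zero {ι : Type*} {p : ℂ} (hp : ‖p‖ < 1) (s : Finset ι)
    (A x : ι → ℂ) (hx : ∀ i, x i ≠ 0) {c : ℂ} (hc : c ≠ 0) {i j : ι}
    (hij : theta (x i / x j) p ≠ 0) (hijc : theta (x i * x j / c) p ≠ 0)
    (hi : ∑ k ∈ s, A k * (theta (x k / x i) p * theta (x k * x i / c) p) = 0)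
    (hj : ∑ k ∈ s, A k * (theta (x k / x j) p * theta (x k * x j / c) p) = 0)
    {z : ℂ} (hz : z ≠ 0) :
    ∑ k ∈ s, A k * (theta (x k / z) p * theta (x k * z / c) p) = 0 := by
  have hxi := hx i
  have hxj := hx j
  have hji : theta (x j / x i) p ≠ 0 := by
    rw [← inv_div, theta_inv hp (by positivity)]
    exact mul_ne_zero (by simp [hx]) hij
  rcases eq_or_ne p 0 with rfl | hp0
  · simp only [theta_zero_right] at *
    have hexp (w : ℂ) (hw : w ≠ 0) : ∑ k ∈ s, A k * ((1 - x k / w) * (1 - x k * w / c)) =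
        ∑ k ∈ s, A k * (1 + x k ^ 2 / c) - (∑ k ∈ s, A k * x k) * (w⁻¹ + w / c) := by
      rw [Finset.sum_mul, ← Finset.sum_sub_distrib]
      refine Finset.sum_congr rfl fun k _ ↦ ?_
      field_simp
      ring
    rw [hexp _ (hx _)] at hi hj
    rw [hexp z hz]
    set α := ∑ k ∈ s, A k * (1 + x k ^ 2 / c)
    set β := ∑ k ∈ s, A k * x k
    have hβ : β = 0 := by
      have : β * ((1 - x i / x j) * (1 - x i * x j / c)) = 0 := by
        have h : β * (((x j)⁻¹ + x j / c) - ((x i)⁻¹ + x i / c)) * x i = 0 := by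
          linear_combination x i * hi - x i * hj
        rw [← neg_eq_zero, ← h]
        field_simp
        ring
      simpa [hij, hijc] using this
    rw [hβ] at hi ⊢
    simpa using hi
  let h (k : ι) (w : ℂ) : ℂ := theta (x k / w) p * theta (x k * w / c) p
  obtain ⟨l, hl, hrel⟩ := exists_linear_relation_of_quasiperiodic (K := c / p) hp hp0
    (by positivity) ![fun w ↦ ∑ k ∈ s, A k * h k w, h i, h j]
    (fun m ↦ by
      fin_cases m
      · exact DifferentiableOn.fun_sum fun k _ ↦
          (differentiableOn_theta_mul_theta hp hc (hx k)).const_mul (A k)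
      · exact differentiableOn_theta_mul_theta hp hc hxi
      · exact differentiableOn_theta_mul_theta hp hc hxj)
    (fun m w hw ↦ by
      have hk (k : ι) : h k (p * w) = c / p * w ^ (-2 : ℤ) * h k w :=
        theta_mul_theta_quasiperiodic hp hp0 hc (hx k) hw
      fin_cases m
      · simp only [Fin.zero_eta, Matrix.cons_val_zero, hk, Finset.mul_sum, mul_left_comm]
      · exact hk i
      · exact hk j)
  simp only [Fin.sum_univ_three, Matrix.cons_val_zero, Matrix.cons_val_one,
    Matrix.cons_val] at hrel
  have hdiag (k : ι) : h k (x k) = 0 := by simp [h, hx k, theta_one hp]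
  have h2 : l 2 = 0 := by
    have := hrel _ hxi
    simp only [hdiag, mul_zero, add_zero] at this
    rw [show ∑ k ∈ s, A k * h k (x i) = 0 from hi, mul_zero, zero_add] at this
    refine (mul_eq_zero.mp this).resolve_right (mul_ne_zero hji ?_)
    rwa [mul_comm (x j)]
  have h1 : l 1 = 0 := by
    have := hrel _ hxj
    simp only [hdiag, mul_zero, add_zero] at this
    rw [show ∑ k ∈ s, A k * h k (x j) = 0 from hj, mul_zero, zero_add] at this
    exact (mul_eq_zero.mp this).resolve_right (mul_ne_zero hij hijc)
  have h0 : l 0 ≠ 0 := fun h0 ↦ hl (by ext m; fin_cases m <;> simp [h0, h1, h2])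
  have := hrel z hz
  rw [h1, h2, zero_mul, zero_mul, add_zero, add_zero] at this
  exact (mul_eq_zero.mp this).resolve_left h0

end ThetaProduct

theorem sum_prod_theta_div_prod_theta_eq_zero {ι : Type*} [DecidableEq ι] {p : ℂ} (hp : ‖p‖ < 1)
    {a : ι → ℂ} (ha : ∀ j, a j ≠ 0) (hdist : ∀ j k, j ≠ k → ∀ m : ℤ, a j / a k ≠ p ^ m)
    (n : ℕ) (s : Finset ι) (hs : s.card = n) (B : Multiset ℂ) (hB : B.card = n)
    (hB0 : ∀ b ∈ B, b ≠ 0) (hbal : ∏ k ∈ s, a k = B.prod) :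
    ∑ k ∈ s, (B.map fun b ↦ theta (a k / b) p).prod / ∏ j ∈ s.erase k, theta (a k / a j) p
      = 0 := by
  have hθ {j k : ι} (hjk : j ≠ k) : theta (a j / a k) p ≠ 0 :=
    theta_ne_zero hp (div_ne_zero (ha j) (ha k)) (hdist j k hjk)
  induction n generalizing s B with
  | zero => simp [Finset.card_eq_zero.mp hs]
  | succ n ih =>
  obtain ⟨b₁, B₁, rfl, hB₁⟩ := Multiset.card_eq_succ_iff.mp hB
  have hb₁ : b₁ ≠ 0 := hB0 b₁ (by simp)
  rcases n with _ | n
  · obtain ⟨i, rfl⟩ := Finset.card_eq_one.mp hs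
    obtain rfl := Multiset.card_eq_zero.mp hB₁
    have hi : a i = b₁ := by simpa using hbal
    simp [hi, hb₁, theta_one hp]
  obtain ⟨b₂, B₂, rfl, hB₂⟩ := Multiset.card_eq_succ_iff.mp hB₁
  have hb₂ : b₂ ≠ 0 := hB0 b₂ (by simp)
  rcases n with _ | n
  · obtain ⟨i, j, hij, rfl⟩ := Finset.card_eq_two.mp hs
    obtain rfl := Multiset.card_eq_zero.mp hB₂
    have hai := ha i
    have haj := ha j
    have hprod : a i * a j = b₁ * b₂ := by simpa [Finset.prod_pair hij] using hbal
    have e₁ : a i / b₂ = (a j / b₁)⁻¹ := by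
      field_simp
      linear_combination hprod
    have e₂ : a j / b₂ = (a i / b₁)⁻¹ := by
      field_simp
      linear_combination hprod
    have e₃ : a j / a i = (a i / a j)⁻¹ := by simp
    have h₁ : ({i, j} : Finset ι).erase i = {j} := by ext; simp; grind
    have h₂ : ({i, j} : Finset ι).erase j = {i} := by ext; simp; grind
    have := hθ hij
    rw [Finset.sum_pair hij, h₁, h₂]
    simp only [Multiset.map_cons, Multiset.prod_cons, Multiset.map_zero, Multiset.prod_zero,
      mul_one, Finset.prod_singleton]
    rw [e₁, e₂, e₃, theta_inv hp (by positivity), theta_inv hp (by positivity),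
      theta_inv hp (by positivity)]
    field_simp
    ring
  set c := b₁ * b₂ with hc
  have hc0 : c ≠ 0 := mul_ne_zero hb₁ hb₂
  let A (k : ι) : ℂ := (B₂.map fun b ↦ theta (a k / b) p).prod /
    ∏ j ∈ s.erase k, theta (a k / a j) p
  have hvanish (i : ι) (hi : i ∈ s) :
      ∑ k ∈ s, A k * (theta (a k / a i) p * theta (a k * a i / c) p) = 0 := by
    have hai := ha i
    rw [← Finset.sum_erase s (a := i) (by simp [hai, theta_one hp]),
      ← ih (s.erase i) (by rw [Finset.card_erase_of_mem hi, hs, Nat.add_sub_cancel]) ((c / a i) ::ₘ B₂)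
        (by simp [hB₂]) ?_ ?_]
    · refine Finset.sum_congr rfl fun k hk ↦ ?_
      have hki := Finset.ne_of_mem_erase hk
      rw [Multiset.map_cons, Multiset.prod_cons, Finset.erase_right_comm,
        show a k / (c / a i) = a k * a i / c by field_simp]
      simp only [A]
      rw [← Finset.mul_prod_erase (s.erase k) (fun j ↦ theta (a k / a j) p)
        (Finset.mem_erase.mpr ⟨hki.symm, hi⟩)]
      have := hθ hki
      field_simp
    · intro b hb
      rcases Multiset.mem_cons.mp hb with rfl | hb
      · positivity
      · exact hB0 b (by simp [hb])
    · rw [← Finset.mul_prod_erase s a hi] at hbal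
      simp only [Multiset.prod_cons] at hbal ⊢
      field_simp
      linear_combination hbal
  obtain ⟨i, j, hi, hj, hij, hijc⟩ :
      ∃ i j, i ∈ s ∧ j ∈ s ∧ i ≠ j ∧ theta (a i * a j / c) p ≠ 0 := by
    obtain ⟨i, hi, j, hj, k, hk, hij, hik, hjk⟩ := Finset.two_lt_card.mp (show 2 < s.card by omega)
    by_cases h : theta (a i * a j / c) p = 0
    · refine ⟨i, k, hi, hk, hik, fun h' ↦ ?_⟩
      have hai := ha i
      have haj := ha j
      have hak := ha k
      obtain ⟨m, hm⟩ : ∃ m : ℤ, a i * a j / c = p ^ m := by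
        by_contra! hne
        exact theta_ne_zero hp (by positivity) hne h
      obtain ⟨l, hl⟩ : ∃ l : ℤ, a i * a k / c = p ^ l := by
        by_contra! hne
        exact theta_ne_zero hp (by positivity) hne h'
      have hquot : a j / a k = p ^ m / p ^ l := by
        rw [← hm, ← hl]
        field_simp
      rcases eq_or_ne p 0 with rfl | hp0
      · have hm0 : m = 0 := by
          by_contra hm0
          rw [zero_zpow m hm0] at hm
          exact (show a i * a j / c ≠ 0 by positivity) hm
        have hl0 : l = 0 := by
          by_contra hl0
          rw [zero_zpow l hl0] at hl
          exact (show a i * a k / c ≠ 0 by positivity) hl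
        exact hdist j k hjk 0 (by simpa [hm0, hl0] using hquot)
      · exact hdist j k hjk (m - l) (by rw [hquot, zpow_sub₀ hp0])
    · exact ⟨i, j, hi, hj, hij, h⟩
  have key := sum_theta_mul_theta_eq_zero hp s A a ha hc0 (hθ hij) hijc
    (hvanish i hi) (hvanish j hj) hb₁
  rw [← key]
  refine Finset.sum_congr rfl fun k _ ↦ ?_
  rw [show a k * b₁ / c = a k / b₂ by rw [hc]; field_simp]
  simp only [A, Multiset.map_cons, Multiset.prod_cons]
  ring

theorem theta_partial_fraction_sum (p : ℂ) (hp : ‖p‖ < 1) (n : ℕ)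
    (a b : Fin n → ℂ) (ha : ∀ j, a j ≠ 0) (hb : ∀ j, b j ≠ 0)
    (hbal : ∏ k, a k = ∏ k, b k)
    (hdist : ∀ j k, j ≠ k → ∀ m : ℤ, a j / a k ≠ p ^ m) :
    ∑ k, (∏ j, theta (a k / b j) p) / ∏ j ∈ Finset.univ.erase k, theta (a k / a j) p
      = 0 := by
  have := sum_prod_theta_div_prod_theta_eq_zero hp ha hdist n Finset.univ (by simp)
    (Finset.univ.val.map b) (by simp) (by simpa using hb) hbal
  simpa only [Multiset.map_map, Function.comp_def, Finset.prod_map_val] using this
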